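/- For q > 0 with q ≠ 1 and any density matrix ρ on ℂ^n with eigenvalues λ_1,…,λ_n (counted with multiplicity), the quantum Rényi entropy R_q(ρ) = (1/(1−q)) · ln(Σ_i λ_i^q) equals the minimum over all unitary matrices U ∈ U(n) of the classical Rényi entropy of the diagonal of UρU*: R_q(ρ) = min_{U ∈ U(n)} R_q((UρU*)_{11},…,(UρU*)_{nn}), and this minimum is attained. -/

import Mathlib

/-!
By the spectral theorem `ρ = V diag(λ) V*`, so for every unitary `U` the diagonal of `U ρ U*` is
`B λ`, where `B i j = |W i j|²` and `W = U V` (`re_conj_diagonal_apply`). As `W` is unitary, `B` is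
doubly stochastic. Jensen's inequality applied to each row of `B`, summed using the column sums,
compares `∑ (B λ)ᵢ ^ q` with `∑ λᵢ ^ q`: the former is at most the latter for
`q > 1` (convexity of `x ^ q`) and at least the latter for `q < 1` (concavity). In both
cases the sign of `1 / (1 - q)` turns this into
`Renyi q λ ≤ Renyi q (B λ)` (`renyi_le_renyi_mulVec`). Equality occurs at `U = V*`.
-/

open Matrix ComplexOrder

/-- Rényi entropy of a (finitely indexed) probability vector, for parameter
`q`: `R_q(p) = (1/(1-q)) * ln (∑ i, p i ^ q)` (real rpow, so `0 ^ q = 0` for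
`q ≠ 0`). -/
noncomputable def Renyi {ι : Type*} [Fintype ι] (q : ℝ) (p : ι → ℝ) : ℝ :=
  (1 / (1 - q)) * Real.log (∑ i, p i ^ q)

/-- A density matrix: positive semidefinite with trace 1. -/
def IsDensityMatrix {ι : Type*} [Fintype ι] [DecidableEq ι]
    (ρ : Matrix ι ι ℂ) : Prop :=
  ρ.PosSemidef ∧ ρ.trace = 1

lemma sum_rpow_pos {ι : Type*} [Fintype ι] {q : ℝ} {p : ι → ℝ}
    (hp : ∀ i, 0 ≤ p i) (hsum : ∑ i, p i = 1) : 0 < ∑ i, p i ^ q := by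
  obtain ⟨i, hi⟩ : ∃ i, 0 < p i := by
    by_contra! h
    have : ∑ i, p i ≤ 0 := Finset.sum_nonpos fun i _ => h i
    linarith
  exact Finset.sum_pos' (fun i _ => Real.rpow_nonneg (hp i) q)
    ⟨i, Finset.mem_univ i, Real.rpow_pos_of_pos hi q⟩

/-- Rényi entropy does not decrease when a probability vector is multiplied by a doubly stochastic
matrix. -/
lemma renyi_le_renyi_mulVec {ι : Type*} [Fintype ι] {q : ℝ} (hq : 0 < q) (hq1 : q ≠ 1)
    {B : ι → ι → ℝ} (hB : ∀ i j, 0 ≤ B i j) (hrow : ∀ i, ∑ j, B i j = 1)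
    (hcol : ∀ j, ∑ i, B i j = 1) {l : ι → ℝ} (hl : ∀ j, 0 ≤ l j) (hsum : ∑ j, l j = 1) :
    Renyi q l ≤ Renyi q (fun i => ∑ j, B i j * l j) := by
  have collapse : ∀ f : ι → ℝ, ∑ i, ∑ j, B i j * f j = ∑ j, f j := fun f => by
    rw [Finset.sum_comm]
    simp_rw [← Finset.sum_mul, hcol, one_mul]
  have hpos := sum_rpow_pos (q := q) hl hsum
  have hpos' := sum_rpow_pos (q := q) (p := fun i => ∑ j, B i j * l j)
    (fun i => Finset.sum_nonneg fun j _ => mul_nonneg (hB i j) (hl j))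
    ((collapse l).trans hsum)
  unfold Renyi
  rcases lt_or_gt_of_ne hq1 with h | h
  · refine mul_le_mul_of_nonneg_left (Real.log_le_log hpos ?_)
      (one_div_nonneg.mpr (by linarith))
    rw [← collapse]
    refine Finset.sum_le_sum fun i _ => ?_
    simpa using (Real.concaveOn_rpow hq.le h.le).le_map_sum (t := Finset.univ) (w := B i) (p := l)
      (fun j _ => hB i j) (hrow i) (fun j _ => hl j)
  · refine mul_le_mul_of_nonpos_left (Real.log_le_log hpos' ?_)
      (one_div_nonpos.mpr (by linarith))
    rw [← collapse (fun j => l j ^ q)]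
    refine Finset.sum_le_sum fun i _ => ?_
    simpa using (convexOn_rpow h.le).map_sum_le (t := Finset.univ) (w := B i) (p := l)
      (fun j _ => hB i j) (hrow i) (fun j _ => hl j)

lemma re_conj_diagonal_apply {ι : Type*} [Fintype ι] [DecidableEq ι] (W : Matrix ι ι ℂ)
    (l : ι → ℝ) (i : ι) :
    ((W * diagonal (fun j => (l j : ℂ)) * Wᴴ) i i).re = ∑ j, Complex.normSq (W i j) * l j := by
  rw [Matrix.mul_apply, Complex.re_sum]
  refine Finset.sum_congr rfl fun j _ => ?_
  rw [Matrix.mul_diagonal, Matrix.conjTranspose_apply, mul_right_comm, Complex.star_def,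
    Complex.mul_conj, ← Complex.ofReal_mul, Complex.ofReal_re]

lemma sum_normSq_row {ι : Type*} [Fintype ι] [DecidableEq ι] {W : Matrix ι ι ℂ}
    (hW : W * Wᴴ = 1) (i : ι) : ∑ j, Complex.normSq (W i j) = 1 := by
  have h := re_conj_diagonal_apply W (fun _ => 1) i
  simpa [hW] using h.symm

lemma sum_normSq_col {ι : Type*} [Fintype ι] [DecidableEq ι] {W : Matrix ι ι ℂ}
    (hW : Wᴴ * W = 1) (j : ι) : ∑ i, Complex.normSq (W i j) = 1 := by
  simpa using sum_normSq_row (W := Wᴴ) (by simpa using hW) j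

/-- for `q > 0`, `q ≠ 1`, the quantum Rényi entropy of a
density matrix `ρ` (the classical Rényi entropy of its eigenvalues) is the
minimum over all unitaries `U` of the classical Rényi entropy of the diagonal
of `U ρ U*`, and the minimum is attained. -/
theorem quantum_renyi_eq_min_diag_renyi (n : ℕ) (q : ℝ)
    (hq : 0 < q) (hq1 : q ≠ 1)
    (ρ : Matrix (Fin n) (Fin n) ℂ) (hρ : IsDensityMatrix ρ) :
    IsLeast
      {x : ℝ | ∃ U : Matrix.unitaryGroup (Fin n) ℂ,
        x = Renyi q (fun i =>
          (((U : Matrix (Fin n) (Fin n) ℂ) * ρ *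
            (U : Matrix (Fin n) (Fin n) ℂ)ᴴ) i i).re)}
      (Renyi q hρ.1.1.eigenvalues) := by
  have hH := hρ.1.1
  have hspec := hH.spectral_theorem
  rw [Unitary.conjStarAlgAut_apply] at hspec
  set V := hH.eigenvectorUnitary with hV
  have hVV : (V : Matrix (Fin n) (Fin n) ℂ)ᴴ * (V : Matrix (Fin n) (Fin n) ℂ) = 1 :=
    Unitary.coe_star_mul_self V
  have hdiag : ∀ U : Matrix.unitaryGroup (Fin n) ℂ, ∀ i,
      (((U : Matrix (Fin n) (Fin n) ℂ) * ρ * (U : Matrix (Fin n) (Fin n) ℂ)ᴴ) i i).re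
        = ∑ j, Complex.normSq (((U * V : Matrix.unitaryGroup (Fin n) ℂ) :
            Matrix (Fin n) (Fin n) ℂ) i j) * hH.eigenvalues j := by
    intro U i
    rw [← re_conj_diagonal_apply]
    conv_lhs => rw [hspec]
    simp only [Submonoid.coe_mul, Matrix.conjTranspose_mul, Matrix.mul_assoc,
      Matrix.star_eq_conjTranspose]
    rfl
  constructor
  · refine ⟨star V, congrArg _ (funext fun i => ?_)⟩
    rw [hdiag, ← re_conj_diagonal_apply]
    simp
  · rintro x ⟨U, rfl⟩
    simp_rw [hdiag]
    refine renyi_le_renyi_mulVec hq hq1 (fun _ _ => Complex.normSq_nonneg _)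
      (sum_normSq_row (Unitary.coe_mul_star_self (U * V)))
      (sum_normSq_col (Unitary.coe_star_mul_self (U * V))) hρ.1.eigenvalues_nonneg ?_
    have h := hH.trace_eq_sum_eigenvalues
    rw [hρ.2] at h
    simpa using (congrArg Complex.re h).symm
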